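/- If u ∈ L^{p₁,q₁}(Ω) and v ∈ L^{p₂,q₂}(Ω) with 1 ≤ p₁, p₂ ≤ ∞, 1 ≤ q₁, q₂ ≤ ∞, and if 1/p₃ = 1/p₁ + 1/p₂ and 1/q₃ ≤ 1/q₁ + 1/q₂, then the product uv belongs to L^{p₃,q₃}(Ω) and ‖uv‖_{L^{p₃,q₃}} ≤ C ‖u‖_{L^{p₁,q₁}} ‖v‖_{L^{p₂,q₂}} for a constant C depending only on the exponents. -/

import Mathlib

open MeasureTheory ENNReal

/-- The Lorentz quasinorm `‖f‖_{L^{p,q}(μ)}`, defined via the distribution function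
`m(f,t) = μ {x : ‖f x‖ > t}`.  For `q = ∞` it is the weak (Marcinkiewicz) quasinorm
`sup_{t ≥ 0} t · m(f,t)^{1/p}`. -/
noncomputable def lorentzNorm {α : Type*} {E : Type*} [MeasurableSpace α] [NormedAddCommGroup E]
    (μ : Measure α) (f : α → E) (p q : ℝ≥0∞) : ℝ≥0∞ :=
  if q = ∞ then ⨆ t : ℝ, ENNReal.ofReal t * (μ {x | t < ‖f x‖}) ^ (1 / p.toReal)
  else (∫⁻ t in Set.Ioi (0 : ℝ), ENNReal.ofReal t ^ (q.toReal - 1) *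
      (μ {x | t < ‖f x‖}) ^ (q.toReal / p.toReal)) ^ (1 / q.toReal)

noncomputable def LZ.rs (a : ℝ → ℝ≥0∞) (y : ℝ) : ℝ≥0∞ :=
  ⨆ (t : ℝ) (_ : ENNReal.ofReal y < a t), ENNReal.ofReal t

noncomputable def LZ.I (a : ℝ → ℝ≥0∞) (p q : ℝ) : ℝ≥0∞ :=
  ∫⁻ t in Set.Ioi (0 : ℝ), ENNReal.ofReal t ^ (q - 1) * a t ^ (q / p)

noncomputable def LZ.J (a : ℝ → ℝ≥0∞) (p q : ℝ) : ℝ≥0∞ :=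
  ∫⁻ y in Set.Ioi (0 : ℝ), ENNReal.ofReal y ^ (q / p - 1) * LZ.rs a y ^ q

noncomputable def LZ.W (a : ℝ → ℝ≥0∞) (p : ℝ) : ℝ≥0∞ :=
  ⨆ t : ℝ, ENNReal.ofReal t * a t ^ (1 / p)

namespace LZ

lemma le_rs {a : ℝ → ℝ≥0∞} {y t : ℝ} (h : ENNReal.ofReal y < a t) :
    ENNReal.ofReal t ≤ rs a y := le_iSup₂ (f := fun (t : ℝ) (_ : ENNReal.ofReal y < a t) => ENNReal.ofReal t) t h

lemma lt_of_lt_rs {a : ℝ → ℝ≥0∞} (ha : Antitone a) {y t : ℝ}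
    (h : ENNReal.ofReal t < rs a y) : ENNReal.ofReal y < a t := by
  unfold rs at h
  simp only [lt_iSup_iff] at h
  obtain ⟨t', h1, h2⟩ := h
  refine h1.trans_le (ha ?_)
  by_contra hc
  exact absurd h2 (not_lt.2 (ENNReal.ofReal_le_ofReal (not_le.1 hc).le))

lemma rs_antitone (a : ℝ → ℝ≥0∞) : Antitone (rs a) := by
  intro y z h
  refine iSup₂_le fun t ht => le_rs ((ENNReal.ofReal_le_ofReal h).trans_lt ht)

/-- power integral, finite endpoint -/
lemma pow_int_fin {e : ℝ} (he : 0 < e) {b : ℝ} (hb : 0 ≤ b) :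
    ∫⁻ t in Set.Ioc 0 b, ENNReal.ofReal t ^ (e - 1) = ENNReal.ofReal b ^ e / ENNReal.ofReal e := by
  have h1 : ∫⁻ t in Set.Ioc 0 b, ENNReal.ofReal t ^ (e - 1)
      = ∫⁻ t in Set.Ioc 0 b, ENNReal.ofReal (t ^ (e - 1)) := by
    refine setLIntegral_congr_fun measurableSet_Ioc fun t ht => ?_
    exact ENNReal.ofReal_rpow_of_pos ht.1
  rw [h1, ← ofReal_integral_eq_lintegral_ofReal]
  · rw [← intervalIntegral.integral_of_le hb, integral_rpow (Or.inl (by linarith))]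
    rw [sub_add_cancel, Real.zero_rpow he.ne', sub_zero, ENNReal.ofReal_div_of_pos he,
      ENNReal.ofReal_rpow_of_nonneg hb he.le]
  · have := (intervalIntegral.intervalIntegrable_rpow' (a := 0) (b := b) (r := e - 1) (by linarith))
    exact (intervalIntegrable_iff_integrableOn_Ioc_of_le hb).1 this
  · filter_upwards [ae_restrict_mem measurableSet_Ioc] with t ht
    exact Real.rpow_nonneg ht.1.le _

lemma pow_int {e : ℝ} (he : 0 < e) (c : ℝ≥0∞) {S : Set ℝ}
    (h1 : ∀ t, 0 < t → ENNReal.ofReal t < c → t ∈ S)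
    (h2 : ∀ t ∈ S, 0 < t ∧ ENNReal.ofReal t ≤ c) :
    ∫⁻ t in S, ENNReal.ofReal t ^ (e - 1) = c ^ e / ENNReal.ofReal e := by
  have he0 : ENNReal.ofReal e ≠ 0 := by simpa using he
  by_cases hc : c = ∞
  · subst hc
    rw [ENNReal.top_rpow_of_pos he, ENNReal.top_div_of_ne_top ENNReal.ofReal_ne_top]
    refine top_unique (le_of_forall_lt fun x hx => ?_)
    have key : ∀ n : ℕ, ENNReal.ofReal n ^ e / ENNReal.ofReal e ≤ ∫⁻ t in S, ENNReal.ofReal t ^ (e - 1) := by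
      intro n
      rw [← pow_int_fin he (Nat.cast_nonneg n)]
      exact lintegral_mono_set fun t ht => h1 t ht.1 ENNReal.ofReal_lt_top
    have hx' : (x * ENNReal.ofReal e) ^ (1 / e) ≠ ∞ :=
      ENNReal.rpow_ne_top_of_nonneg (by positivity) (ENNReal.mul_ne_top hx.ne ENNReal.ofReal_ne_top)
    obtain ⟨n, hn⟩ := ENNReal.exists_nat_gt hx'
    refine lt_of_lt_of_le ?_ (key n)
    rw [ENNReal.lt_div_iff_mul_lt (Or.inl he0) (Or.inl ENNReal.ofReal_ne_top), ENNReal.ofReal_natCast]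
    rwa [one_div, ENNReal.rpow_inv_lt_iff he] at hn
  · have hS : S =ᵐ[volume] Set.Ioc 0 c.toReal := by
      have hb : S ⊆ Set.Ioc 0 c.toReal := fun t ht =>
        ⟨(h2 t ht).1, (ENNReal.ofReal_le_iff_le_toReal hc).1 (h2 t ht).2⟩
      have hl : Set.Ioo 0 c.toReal ⊆ S := fun t ht =>
        h1 t ht.1 ((ENNReal.ofReal_lt_iff_lt_toReal ht.1.le hc).2 ht.2)
      refine Filter.EventuallyLE.antisymm hb.eventuallyLE ?_
      exact (Ioo_ae_eq_Ioc (μ := volume)).symm.le.trans hl.eventuallyLE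
    rw [setLIntegral_congr hS, pow_int_fin he ENNReal.toReal_nonneg, ENNReal.ofReal_toReal hc]

lemma I_eq_J {a : ℝ → ℝ≥0∞} (ha : Antitone a) {p q : ℝ} (hp : 0 < p) (hq : 0 < q) :
    I a p q = ENNReal.ofReal p⁻¹ * J a p q := by
  have hqp : 0 < q / p := by positivity
  have e1 : ∀ t, a t ^ (q / p) = ENNReal.ofReal (q / p) *
      ∫⁻ y in Set.Ioi (0 : ℝ), {y | ENNReal.ofReal y < a t}.indicator
        (fun y => ENNReal.ofReal y ^ (q / p - 1)) y := by
    intro t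
    have hm : MeasurableSet {y | ENNReal.ofReal y < a t} :=
      measurableSet_lt ENNReal.measurable_ofReal measurable_const
    rw [lintegral_indicator hm, Measure.restrict_restrict hm,
      pow_int hqp (a t) (S := {y | ENNReal.ofReal y < a t} ∩ Set.Ioi 0)
        (fun t h h' => ⟨h', h⟩) (fun t h => ⟨h.2, le_of_lt h.1⟩),
      ENNReal.mul_div_cancel (by simpa using hqp) ENNReal.ofReal_ne_top]
  have e2 : ∀ y, rs a y ^ q = ENNReal.ofReal q *
      ∫⁻ t in Set.Ioi (0 : ℝ), {t | ENNReal.ofReal y < a t}.indicator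
        (fun t => ENNReal.ofReal t ^ (q - 1)) t := by
    intro y
    have hm : MeasurableSet {t | ENNReal.ofReal y < a t} :=
      measurableSet_lt measurable_const ha.measurable
    rw [lintegral_indicator hm, Measure.restrict_restrict hm,
      pow_int hq (rs a y) (S := {t | ENNReal.ofReal y < a t} ∩ Set.Ioi 0)
        (fun t h h' => ⟨lt_of_lt_rs ha h', h⟩) (fun t h => ⟨h.2, le_rs h.1⟩),
      ENNReal.mul_div_cancel (by simpa using hq) ENNReal.ofReal_ne_top]
  let F : ℝ → ℝ → ℝ≥0∞ := fun t y => {z : ℝ × ℝ | ENNReal.ofReal z.2 < a z.1}.indicator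
    (fun z => ENNReal.ofReal z.1 ^ (q - 1) * ENNReal.ofReal z.2 ^ (q / p - 1)) (t, y)
  have hFm : Measurable (Function.uncurry F) := by
    have : MeasurableSet {z : ℝ × ℝ | ENNReal.ofReal z.2 < a z.1} :=
      measurableSet_lt (ENNReal.measurable_ofReal.comp measurable_snd)
        (ha.measurable.comp measurable_fst)
    refine Measurable.indicator ?_ this
    fun_prop
  have hI : I a p q = ENNReal.ofReal (q / p) * ∫⁻ t in Set.Ioi (0 : ℝ), ∫⁻ y in Set.Ioi (0 : ℝ), F t y := by
    unfold I
    rw [← lintegral_const_mul' _ _ ENNReal.ofReal_ne_top]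
    refine lintegral_congr fun t => ?_
    rw [e1 t, mul_left_comm, ← lintegral_const_mul]
    · congr 1
      refine lintegral_congr fun y => ?_
      by_cases h : ENNReal.ofReal y < a t <;> simp [F, h]
    · refine Measurable.indicator (by fun_prop)
        (measurableSet_lt ENNReal.measurable_ofReal measurable_const)
  have hJ : J a p q = ENNReal.ofReal q * ∫⁻ y in Set.Ioi (0 : ℝ), ∫⁻ t in Set.Ioi (0 : ℝ), F t y := by
    unfold J
    rw [← lintegral_const_mul' _ _ ENNReal.ofReal_ne_top]
    refine lintegral_congr fun y => ?_
    rw [e2 y, mul_left_comm, ← lintegral_const_mul]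
    · congr 1
      refine lintegral_congr fun t => ?_
      by_cases h : ENNReal.ofReal y < a t <;> simp [F, h, mul_comm]
    · refine Measurable.indicator (by fun_prop)
        (measurableSet_lt measurable_const ha.measurable)
  rw [hI, hJ, lintegral_lintegral_swap hFm.aemeasurable, ← mul_assoc,
    ← ENNReal.ofReal_mul (by positivity)]
  congr 2
  field_simp

lemma key {a b d : ℝ → ℝ≥0∞} (hd : Antitone d)
    (h : ∀ s r, 0 < s → 0 < r → d (s * r) ≤ max (a s) (b r)) {y : ℝ}
    (hx : rs a y ≠ ∞) (hz : rs b y ≠ ∞) : rs d y ≤ rs a y * rs b y := by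
  refine iSup₂_le fun t ht => ?_
  by_contra hc
  rw [not_le] at hc
  have hx' := ENNReal.ofReal_toReal hx
  have hz' := ENNReal.ofReal_toReal hz
  set x := (rs a y).toReal
  set z := (rs b y).toReal
  have hx0 : 0 ≤ x := ENNReal.toReal_nonneg
  have hz0 : 0 ≤ z := ENNReal.toReal_nonneg
  have hlt : x * z < t := by
    rw [← hx', ← hz', ← ENNReal.ofReal_mul hx0] at hc
    exact (ENNReal.ofReal_lt_ofReal_iff_of_nonneg (by positivity)).1 hc
  have hcont : Continuous fun ε : ℝ => (x + ε) * (z + ε) := by fun_prop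
  have hev : ∀ᶠ ε in nhdsWithin (0 : ℝ) (Set.Ioi 0), (x + ε) * (z + ε) < t := by
    have := hcont.tendsto 0
    simp only [add_zero] at this
    exact (this.mono_left nhdsWithin_le_nhds).eventually (gt_mem_nhds hlt)
  obtain ⟨ε, h1, h2⟩ := (hev.and self_mem_nhdsWithin).exists
  have h2 : 0 < ε := h2
  have ha : a (x + ε) ≤ ENNReal.ofReal y := by
    by_contra hh
    have := le_rs (not_le.1 hh)
    rw [← hx', ENNReal.ofReal_le_ofReal_iff hx0] at this
    linarith
  have hb : b (z + ε) ≤ ENNReal.ofReal y := by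
    by_contra hh
    have := le_rs (not_le.1 hh)
    rw [← hz', ENNReal.ofReal_le_ofReal_iff hz0] at this
    linarith
  have := (hd h1.le).trans ((h (x + ε) (z + ε) (by linarith) (by linarith)).trans (max_le ha hb))
  exact absurd ht (not_lt.2 this)

lemma rs_le_W {a : ℝ → ℝ≥0∞} {p : ℝ} (hp : 0 < p) (y : ℝ) :
    ENNReal.ofReal y ^ (1 / p) * rs a y ≤ W a p := by
  unfold rs
  simp only [ENNReal.mul_iSup]
  refine iSup₂_le fun t ht => ?_
  rw [mul_comm]
  refine le_trans ?_ (le_iSup (fun t : ℝ => ENNReal.ofReal t * a t ^ (1 / p)) t)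
  gcongr

lemma W_le {a : ℝ → ℝ≥0∞} {p : ℝ} (hp : 0 < p) {K : ℝ≥0∞}
    (h : ∀ y, 0 < y → ENNReal.ofReal y ^ (1 / p) * rs a y ≤ K) : W a p ≤ K := by
  refine iSup_le fun t => ?_
  by_cases ht : t ≤ 0
  · simp [ENNReal.ofReal_of_nonpos ht]
  push Not at ht
  have ht0 : ENNReal.ofReal t ≠ 0 := by simpa using ht
  rw [mul_comm, ← ENNReal.le_div_iff_mul_le (Or.inl ht0) (Or.inl ENNReal.ofReal_ne_top),
    one_div, ENNReal.rpow_inv_le_iff hp]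
  refine le_of_forall_lt fun w hw => ?_
  obtain ⟨w', hw1, hw2⟩ := exists_between hw
  refine hw1.trans_le ?_
  have hwt : w' ≠ ∞ := (hw2.trans_le le_top).ne
  have hw0 : 0 < w'.toReal := ENNReal.toReal_pos (bot_le.trans_lt hw1).ne' hwt
  have h3 := h w'.toReal hw0
  rw [ENNReal.ofReal_toReal hwt] at h3
  rw [← ENNReal.rpow_inv_le_iff hp, ENNReal.le_div_iff_mul_le (Or.inl ht0) (Or.inl ENNReal.ofReal_ne_top), ← one_div]
  refine le_trans ?_ h3
  gcongr
  apply le_rs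
  rwa [ENNReal.ofReal_toReal hwt]

lemma rs_ne_top {a : ℝ → ℝ≥0∞} {p : ℝ} (hp : 0 < p) (hW : W a p ≠ ∞)
    {y : ℝ} (hy : 0 < y) : rs a y ≠ ∞ := by
  intro h
  have := rs_le_W (a := a) hp y
  rw [h, ENNReal.mul_top] at this
  · exact hW (top_unique this)
  · have : 0 < ENNReal.ofReal y ^ (1 / p) := ENNReal.rpow_pos (by simpa using hy) ENNReal.ofReal_ne_top
    exact this.ne'

lemma W_le_I {a : ℝ → ℝ≥0∞} (ha : Antitone a) {p q : ℝ} (hp : 0 < p) (hq : 0 < q) :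
    W a p ≤ ENNReal.ofReal q ^ (1 / q) * I a p q ^ (1 / q) := by
  refine iSup_le fun t => ?_
  by_cases ht : t ≤ 0
  · simp [ENNReal.ofReal_of_nonpos ht]
  push Not at ht
  rw [← ENNReal.mul_rpow_of_nonneg _ _ (by positivity), one_div q, ENNReal.le_rpow_inv_iff hq,
    ENNReal.mul_rpow_of_nonneg _ _ hq.le, ← ENNReal.rpow_mul]
  have : 1 / p * q = q / p := by ring
  rw [this]
  have hq0 : ENNReal.ofReal q ≠ 0 := by simpa using hq
  calc ENNReal.ofReal t ^ q * a t ^ (q / p)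
      = ENNReal.ofReal q * ((ENNReal.ofReal t ^ q / ENNReal.ofReal q) * a t ^ (q / p)) := by
        rw [← mul_assoc, ENNReal.mul_div_cancel hq0 ENNReal.ofReal_ne_top]
    _ ≤ _ := by
        gcongr
        rw [← pow_int_fin hq ht.le, ← lintegral_mul_const _ (by fun_prop)]
        refine (setLIntegral_mono' measurableSet_Ioc fun s hs => ?_).trans
          (lintegral_mono_set (Set.Ioc_subset_Ioi_self))
        gcongr
        exact ha hs.2

lemma I_embed {a : ℝ → ℝ≥0∞} {p q r : ℝ} (hp : 0 < p) (hq : 0 < q) (hqr : q ≤ r)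
    (hW : W a p ≠ ∞) :
    I a p r ≤ W a p ^ (r - q) * I a p q := by
  unfold I
  rw [← lintegral_const_mul' _ _ (ENNReal.rpow_ne_top_of_nonneg (by linarith) hW)]
  refine setLIntegral_mono' measurableSet_Ioi fun t ht => ?_
  have ht : 0 < t := ht
  have ht0 : ENNReal.ofReal t ≠ 0 := by simpa using ht
  have h1 : ENNReal.ofReal t ^ (r - 1) * a t ^ (r / p)
      = (ENNReal.ofReal t * a t ^ (1 / p)) ^ (r - q) * (ENNReal.ofReal t ^ (q - 1) * a t ^ (q / p)) := by
    have e1 : r - 1 = (r - q) + (q - 1) := by ring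
    have e2 : r / p = 1 / p * (r - q) + q / p := by ring
    have : 0 ≤ r - q := by linarith
    rw [e1, e2, ENNReal.rpow_add _ _ ht0 ENNReal.ofReal_ne_top,
      ENNReal.rpow_add_of_nonneg _ _ (by positivity) (by positivity),
      ENNReal.mul_rpow_of_nonneg _ _ (by linarith), ENNReal.rpow_mul]
    ring
  rw [h1]
  have hrq : 0 ≤ r - q := by linarith
  gcongr
  exact le_iSup (fun t : ℝ => ENNReal.ofReal t * a t ^ (1 / p)) t

lemma holder_fin {a b d : ℝ → ℝ≥0∞} {p₁ p₂ p q₁ q₂ q : ℝ} (hd : Antitone d)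
    (h : ∀ s r, 0 < s → 0 < r → d (s * r) ≤ max (a s) (b r))
    (hp₁ : 0 < p₁) (hp₂ : 0 < p₂) (hq₁ : 0 < q₁) (hq₂ : 0 < q₂) (hq : 0 < q)
    (hpe : 1 / p = 1 / p₁ + 1 / p₂) (hqe : 1 / q = 1 / q₁ + 1 / q₂)
    (hWa : W a p₁ ≠ ∞) (hWb : W b p₂ ≠ ∞) :
    J d p q ≤ J a p₁ q₁ ^ (q / q₁) * J b p₂ q₂ ^ (q / q₂) := by
  have hqs : q / q₁ + q / q₂ = 1 := by
    have : q * (1 / q) = q * (1 / q₁ + 1 / q₂) := by rw [hqe]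
    rw [mul_one_div_cancel hq.ne'] at this
    rw [this]; ring
  have hps : q / p = q / p₁ + q / p₂ := by
    rw [div_eq_mul_one_div, hpe]; ring
  have hconj : (q₁ / q).HolderConjugate (q₂ / q) := by
    refine Real.holderConjugate_iff.2 ⟨?_, ?_⟩
    · rw [lt_div_iff₀ hq, one_mul]
      have : 0 < q / q₂ := by positivity
      have h3 : q / q₁ < 1 := by linarith
      rwa [div_lt_one hq₁] at h3
    · rw [inv_div, inv_div, hqs]
  have hma : Measurable (rs a) := (rs_antitone a).measurable
  have hmb : Measurable (rs b) := (rs_antitone b).measurable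
  have H := ENNReal.lintegral_mul_le_Lp_mul_Lq (volume.restrict (Set.Ioi (0 : ℝ))) hconj
    (f := fun y => ENNReal.ofReal y ^ (q / p₁ - q / q₁) * rs a y ^ q)
    (g := fun y => ENNReal.ofReal y ^ (q / p₂ - q / q₂) * rs b y ^ q)
    (by fun_prop) (by fun_prop)
  have hgen : ∀ (c : ℝ → ℝ≥0∞) (P Q : ℝ), 0 < Q → (∫⁻ y in Set.Ioi (0 : ℝ),
      (ENNReal.ofReal y ^ (q / P - q / Q) * rs c y ^ q) ^ (Q / q)) ^ (1 / (Q / q))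
      = J c P Q ^ (q / Q) := by
    intro c P Q hQ
    rw [one_div_div]
    congr 1
    refine lintegral_congr fun y => ?_
    rw [ENNReal.mul_rpow_of_nonneg _ _ (by positivity), ← ENNReal.rpow_mul, ← ENNReal.rpow_mul]
    congr 2 <;> field_simp
  rw [hgen a p₁ q₁ hq₁, hgen b p₂ q₂ hq₂] at H
  refine le_trans ?_ H
  refine setLIntegral_mono' measurableSet_Ioi fun y hy => ?_
  have hy : 0 < y := hy
  have hy0 : ENNReal.ofReal y ≠ 0 := by simpa using hy
  have e : q / p - 1 = (q / p₁ - q / q₁) + (q / p₂ - q / q₂) := by rw [hps]; linarith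
  have hk := key hd h (rs_ne_top hp₁ hWa hy) (rs_ne_top hp₂ hWb hy)
  calc ENNReal.ofReal y ^ (q / p - 1) * rs d y ^ q
      ≤ ENNReal.ofReal y ^ (q / p - 1) * (rs a y * rs b y) ^ q := by gcongr
    _ = _ := by
      rw [e, ENNReal.rpow_add _ _ hy0 ENNReal.ofReal_ne_top,
        ENNReal.mul_rpow_of_nonneg _ _ hq.le]
      simp only [Pi.mul_apply]
      ring

lemma holder_mixed {a b d : ℝ → ℝ≥0∞} {p₁ p₂ p q : ℝ} (hd : Antitone d)
    (h : ∀ s r, 0 < s → 0 < r → d (s * r) ≤ max (a s) (b r))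
    (hp₁ : 0 < p₁) (hp₂ : 0 < p₂) (hq : 0 < q)
    (hpe : 1 / p = 1 / p₁ + 1 / p₂)
    (hWa : W a p₁ ≠ ∞) (hWb : W b p₂ ≠ ∞) :
    J d p q ≤ W a p₁ ^ q * J b p₂ q := by
  have hps : q / p = q / p₁ + q / p₂ := by
    rw [div_eq_mul_one_div, hpe]; ring
  unfold J
  rw [← lintegral_const_mul' _ _ (ENNReal.rpow_ne_top_of_nonneg hq.le hWa)]
  refine setLIntegral_mono' measurableSet_Ioi fun y hy => ?_
  have hy : 0 < y := hy
  have hy0 : ENNReal.ofReal y ≠ 0 := by simpa using hy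
  have e : q / p - 1 = 1 / p₁ * q + (q / p₂ - 1) := by rw [hps]; ring
  have hk := key hd h (rs_ne_top hp₁ hWa hy) (rs_ne_top hp₂ hWb hy)
  calc ENNReal.ofReal y ^ (q / p - 1) * rs d y ^ q
      ≤ ENNReal.ofReal y ^ (q / p - 1) * (rs a y * rs b y) ^ q := by gcongr
    _ = (ENNReal.ofReal y ^ (1 / p₁) * rs a y) ^ q *
          (ENNReal.ofReal y ^ (q / p₂ - 1) * rs b y ^ q) := by
      rw [e, ENNReal.rpow_add _ _ hy0 ENNReal.ofReal_ne_top,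
        ENNReal.mul_rpow_of_nonneg _ _ hq.le, ENNReal.mul_rpow_of_nonneg _ _ hq.le,
        ENNReal.rpow_mul]
      ring
    _ ≤ _ := by
      gcongr
      exact rs_le_W hp₁ y

lemma holder_weak {a b d : ℝ → ℝ≥0∞} {p₁ p₂ p : ℝ} (hd : Antitone d)
    (h : ∀ s r, 0 < s → 0 < r → d (s * r) ≤ max (a s) (b r))
    (hp₁ : 0 < p₁) (hp₂ : 0 < p₂) (hp : 0 < p)
    (hpe : 1 / p = 1 / p₁ + 1 / p₂)
    (hWa : W a p₁ ≠ ∞) (hWb : W b p₂ ≠ ∞) :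
    W d p ≤ W a p₁ * W b p₂ := by
  refine W_le hp fun y hy => ?_
  have hy0 : ENNReal.ofReal y ≠ 0 := by simpa using hy
  have hk := key hd h (rs_ne_top hp₁ hWa hy) (rs_ne_top hp₂ hWb hy)
  calc ENNReal.ofReal y ^ (1 / p) * rs d y
      ≤ ENNReal.ofReal y ^ (1 / p) * (rs a y * rs b y) := by gcongr
    _ = (ENNReal.ofReal y ^ (1 / p₁) * rs a y) * (ENNReal.ofReal y ^ (1 / p₂) * rs b y) := by
      rw [hpe, ENNReal.rpow_add _ _ hy0 ENNReal.ofReal_ne_top]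
      ring
    _ ≤ _ := by
      gcongr
      · exact rs_le_W hp₁ y
      · exact rs_le_W hp₂ y

/-- The Lorentz quasinorm in terms of the distribution function. -/
noncomputable def N (a : ℝ → ℝ≥0∞) (p : ℝ) (q : ℝ≥0∞) : ℝ≥0∞ :=
  if q = ∞ then W a p else I a p q.toReal ^ (1 / q.toReal)

lemma ofReal_rpow_ne_top {x : ℝ} (hx : 0 < x) (e : ℝ) : ENNReal.ofReal x ^ e ≠ ∞ := by
  rw [ENNReal.ofReal_rpow_of_pos hx]
  exact ENNReal.ofReal_ne_top

lemma W_le_N {p : ℝ} {q : ℝ≥0∞} (hp : 0 < p) (hq : q ≠ 0) :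
    ∃ C : ℝ≥0∞, C ≠ ∞ ∧ ∀ a : ℝ → ℝ≥0∞, Antitone a → W a p ≤ C * N a p q := by
  by_cases h : q = ∞
  · exact ⟨1, one_ne_top, fun a _ => by simp [N, h]⟩
  · have hq0 := ENNReal.toReal_pos hq h
    refine ⟨_, ofReal_rpow_ne_top hq0 (1 / q.toReal), fun a ha => ?_⟩
    simp only [N, h, if_false]
    exact W_le_I ha hp hq0

lemma N_embed {p : ℝ} {q r : ℝ≥0∞} (hp : 0 < p) (hq : q ≠ 0) (hqr : q ≤ r) :
    ∃ C : ℝ≥0∞, C ≠ ∞ ∧ ∀ a : ℝ → ℝ≥0∞, Antitone a → N a p q ≠ ∞ → N a p r ≤ C * N a p q := by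
  obtain ⟨C, hC, hW⟩ := W_le_N hp hq
  by_cases hr : r = ∞
  · refine ⟨C, hC, fun a ha _ => ?_⟩
    rw [N, if_pos hr]
    exact hW a ha
  have hqt : q ≠ ∞ := fun h => hr (top_unique (h ▸ hqr))
  have hq0 := ENNReal.toReal_pos hq hqt
  have hle : q.toReal ≤ r.toReal := (ENNReal.toReal_le_toReal hqt hr).2 hqr
  have hr0 : 0 < r.toReal := hq0.trans_le hle
  have hsub : 0 ≤ r.toReal - q.toReal := by linarith
  refine ⟨(C ^ (r.toReal - q.toReal)) ^ (1 / r.toReal),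
    ENNReal.rpow_ne_top_of_nonneg (by positivity) (ENNReal.rpow_ne_top_of_nonneg hsub hC),
    fun a ha hN => ?_⟩
  have hWa := hW a ha
  have hWt : W a p ≠ ∞ := ne_top_of_le_ne_top (ENNReal.mul_ne_top hC hN) hWa
  have h1 := I_embed hp hq0 hle hWt
  have h2 : I a p q.toReal = N a p q ^ q.toReal := by
    rw [N, if_neg hqt, ← ENNReal.rpow_mul, one_div_mul_cancel hq0.ne', ENNReal.rpow_one]
  rw [show N a p r = I a p r.toReal ^ (1 / r.toReal) by rw [N, if_neg hr]]
  calc I a p r.toReal ^ (1 / r.toReal)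
      ≤ ((C * N a p q) ^ (r.toReal - q.toReal) * N a p q ^ q.toReal) ^ (1 / r.toReal) := by
        rw [← h2]
        gcongr
        exact h1.trans (by gcongr)
    _ = _ := by
        rw [ENNReal.mul_rpow_of_nonneg _ _ hsub, mul_assoc,
          ← ENNReal.rpow_add_of_nonneg _ _ hsub hq0.le, sub_add_cancel,
          ENNReal.mul_rpow_of_nonneg _ _ (by positivity), ← ENNReal.rpow_mul (N a p q),
          mul_one_div_cancel hr0.ne', ENNReal.rpow_one]

lemma J_eq_I {a : ℝ → ℝ≥0∞} (ha : Antitone a) {p q : ℝ} (hp : 0 < p) (hq : 0 < q) :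
    J a p q = ENNReal.ofReal p * I a p q := by
  rw [I_eq_J ha hp hq, ← mul_assoc, ← ENNReal.ofReal_mul hp.le, mul_inv_cancel₀ hp.ne',
    ENNReal.ofReal_one, one_mul]

lemma holder_N_mixed {p₁ p₂ p : ℝ} {q : ℝ≥0∞} (hp₁ : 0 < p₁) (hp₂ : 0 < p₂) (hp : 0 < p)
    (hpe : 1 / p = 1 / p₁ + 1 / p₂) (hq : q ≠ 0) (hqt : q ≠ ∞) :
    ∃ C : ℝ≥0∞, C ≠ ∞ ∧ ∀ a b d : ℝ → ℝ≥0∞, Antitone a → Antitone b → Antitone d →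
      (∀ s r, 0 < s → 0 < r → d (s * r) ≤ max (a s) (b r)) →
      W a p₁ ≠ ∞ → W b p₂ ≠ ∞ →
      N d p q ≤ C * N a p₁ ∞ * N b p₂ q := by
  have hq0 := ENNReal.toReal_pos hq hqt
  refine ⟨(ENNReal.ofReal p⁻¹ * ENNReal.ofReal p₂) ^ (1 / q.toReal),
    ENNReal.rpow_ne_top_of_nonneg (by positivity) (by finiteness),
    fun a b d ha hb hd h hWa hWb => ?_⟩
  have H := holder_mixed hd h hp₁ hp₂ hq0 hpe hWa hWb
  simp only [N, hqt, if_true, if_false]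
  calc I d p q.toReal ^ (1 / q.toReal)
      ≤ (ENNReal.ofReal p⁻¹ * (W a p₁ ^ q.toReal * (ENNReal.ofReal p₂ * I b p₂ q.toReal)))
          ^ (1 / q.toReal) := by
        rw [I_eq_J hd hp hq0, ← J_eq_I hb hp₂ hq0]
        gcongr
    _ = ((ENNReal.ofReal p⁻¹ * ENNReal.ofReal p₂) * W a p₁ ^ q.toReal * I b p₂ q.toReal)
          ^ (1 / q.toReal) := by
        congr 1; ring
    _ = _ := by
        rw [ENNReal.mul_rpow_of_nonneg _ _ (by positivity),
          ENNReal.mul_rpow_of_nonneg _ _ (by positivity), ← ENNReal.rpow_mul (W a p₁),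
          mul_one_div_cancel hq0.ne', ENNReal.rpow_one]

lemma holder_N_fin {p₁ p₂ p : ℝ} {q₁ q₂ q : ℝ≥0∞} (hp₁ : 0 < p₁) (hp₂ : 0 < p₂) (hp : 0 < p)
    (hpe : 1 / p = 1 / p₁ + 1 / p₂) (hq : q ≠ 0) (hqt : q ≠ ∞) (hq1 : q₁ ≠ 0) (hqt1 : q₁ ≠ ∞)
    (hq2 : q₂ ≠ 0) (hqt2 : q₂ ≠ ∞)
    (hqe : 1 / q.toReal = 1 / q₁.toReal + 1 / q₂.toReal) :
    ∃ C : ℝ≥0∞, C ≠ ∞ ∧ ∀ a b d : ℝ → ℝ≥0∞, Antitone a → Antitone b → Antitone d →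
      (∀ s r, 0 < s → 0 < r → d (s * r) ≤ max (a s) (b r)) →
      W a p₁ ≠ ∞ → W b p₂ ≠ ∞ →
      N d p q ≤ C * N a p₁ q₁ * N b p₂ q₂ := by
  have hq0 := ENNReal.toReal_pos hq hqt
  have hq10 := ENNReal.toReal_pos hq1 hqt1
  have hq20 := ENNReal.toReal_pos hq2 hqt2
  refine ⟨ENNReal.ofReal p⁻¹ ^ (1 / q.toReal) * ENNReal.ofReal p₁ ^ (1 / q₁.toReal)
      * ENNReal.ofReal p₂ ^ (1 / q₂.toReal),
    ENNReal.mul_ne_top (ENNReal.mul_ne_top (ofReal_rpow_ne_top (by positivity) _)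
      (ofReal_rpow_ne_top hp₁ _)) (ofReal_rpow_ne_top hp₂ _),
    fun a b d ha hb hd h hWa hWb => ?_⟩
  have H := holder_fin hd h hp₁ hp₂ hq10 hq20 hq0 hpe hqe hWa hWb
  simp only [N, hqt, hqt1, hqt2, if_false]
  calc I d p q.toReal ^ (1 / q.toReal)
      ≤ (ENNReal.ofReal p⁻¹ * (J a p₁ q₁.toReal ^ (q.toReal / q₁.toReal)
          * J b p₂ q₂.toReal ^ (q.toReal / q₂.toReal))) ^ (1 / q.toReal) := by
        rw [I_eq_J hd hp hq0]
        gcongr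
    _ = ENNReal.ofReal p⁻¹ ^ (1 / q.toReal) * (J a p₁ q₁.toReal ^ (1 / q₁.toReal)
          * J b p₂ q₂.toReal ^ (1 / q₂.toReal)) := by
        rw [ENNReal.mul_rpow_of_nonneg _ _ (by positivity),
          ENNReal.mul_rpow_of_nonneg _ _ (by positivity), ← ENNReal.rpow_mul, ← ENNReal.rpow_mul]
        congr 3 <;> field_simp
    _ = _ := by
        rw [J_eq_I ha hp₁ hq10, J_eq_I hb hp₂ hq20, ENNReal.mul_rpow_of_nonneg _ _ (by positivity),
          ENNReal.mul_rpow_of_nonneg _ _ (by positivity)]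
        ring

lemma holder_N {p₁ p₂ p : ℝ} {q₁ q₂ q : ℝ≥0∞} (hp₁ : 0 < p₁) (hp₂ : 0 < p₂) (hp : 0 < p)
    (hpe : 1 / p = 1 / p₁ + 1 / p₂) (hq1 : q₁ ≠ 0) (hq2 : q₂ ≠ 0)
    (hqe : q⁻¹ = q₁⁻¹ + q₂⁻¹) :
    ∃ C : ℝ≥0∞, C ≠ ∞ ∧ ∀ a b d : ℝ → ℝ≥0∞, Antitone a → Antitone b → Antitone d →
      (∀ s r, 0 < s → 0 < r → d (s * r) ≤ max (a s) (b r)) →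
      W a p₁ ≠ ∞ → W b p₂ ≠ ∞ →
      N d p q ≤ C * N a p₁ q₁ * N b p₂ q₂ := by
  have hq : q ≠ 0 := by
    rintro rfl
    rw [ENNReal.inv_zero] at hqe
    have := ENNReal.add_ne_top.2 ⟨ENNReal.inv_ne_top.2 hq1, ENNReal.inv_ne_top.2 hq2⟩
    exact this hqe.symm
  by_cases h1 : q₁ = ∞
  · have hqq : q = q₂ := by
      rw [h1, ENNReal.inv_top, zero_add] at hqe
      exact inv_injective hqe
    subst h1 hqq
    by_cases h2 : q = ∞
    · subst h2
      refine ⟨1, one_ne_top, fun a b d ha hb hd h hWa hWb => ?_⟩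
      simpa [N] using holder_weak hd h hp₁ hp₂ hp hpe hWa hWb
    · exact holder_N_mixed hp₁ hp₂ hp hpe hq h2
  by_cases h2 : q₂ = ∞
  · have hqq : q = q₁ := by
      rw [h2, ENNReal.inv_top, add_zero] at hqe
      exact inv_injective hqe
    subst h2 hqq
    obtain ⟨C, hC, H⟩ := holder_N_mixed hp₂ hp₁ hp (by rw [hpe, add_comm]) hq h1
    refine ⟨C, hC, fun a b d ha hb hd h hWa hWb => ?_⟩
    have := H b a d hb ha hd (fun s r hs hr => by rw [mul_comm, max_comm]; exact h r s hr hs) hWb hWa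
    rwa [mul_right_comm]
  · have hqt : q ≠ ∞ := by
      rintro rfl
      rw [ENNReal.inv_top] at hqe
      have := (add_eq_zero.1 hqe.symm).1
      exact h1 (ENNReal.inv_eq_zero.1 this)
    refine holder_N_fin hp₁ hp₂ hp hpe hq hqt hq1 h1 hq2 h2 ?_
    have := congrArg ENNReal.toReal hqe
    rw [ENNReal.toReal_add (ENNReal.inv_ne_top.2 hq1) (ENNReal.inv_ne_top.2 hq2)] at this
    simpa [ENNReal.toReal_inv] using this

lemma N_half {p : ℝ} {q : ℝ≥0∞} (hp : 0 < p) (hq : q ≠ 0) (c : ℝ → ℝ≥0∞) :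
    N c p q = 2 ^ (1 / p) * N (fun t => c t / 2) p q := by
  have h2 : ∀ t, c t = 2 * (c t / 2) := fun t =>
    (ENNReal.mul_div_cancel two_ne_zero ENNReal.ofNat_ne_top).symm
  by_cases h : q = ∞
  · simp only [N, h, if_true, W, ENNReal.mul_iSup]
    refine iSup_congr fun t => ?_
    conv_lhs => rw [h2 t, ENNReal.mul_rpow_of_nonneg _ _ (by positivity)]
    ring
  · have hq0 := ENNReal.toReal_pos hq h
    simp only [N, h, if_false]
    have : I c p q.toReal = 2 ^ (q.toReal / p) * I (fun t => c t / 2) p q.toReal := by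
      unfold I
      rw [← lintegral_const_mul' _ _ (ENNReal.rpow_ne_top_of_nonneg (by positivity) ENNReal.ofNat_ne_top)]
      refine lintegral_congr fun t => ?_
      conv_lhs => rw [h2 t, ENNReal.mul_rpow_of_nonneg _ _ (by positivity)]
      ring
    rw [this, ENNReal.mul_rpow_of_nonneg _ _ (by positivity), ← ENNReal.rpow_mul]
    congr 2
    field_simp

lemma N_top (a : ℝ → ℝ≥0∞) {q : ℝ≥0∞} (hq : q ≠ 0) : N a 0 q = ∞ := by
  by_cases h : q = ∞
  · simp only [N, h, if_true, W, _root_.div_zero, ENNReal.rpow_zero, mul_one]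
    refine top_unique (le_of_forall_lt fun x hx => ?_)
    obtain ⟨n, hn⟩ := ENNReal.exists_nat_gt hx.ne
    refine hn.trans_le ?_
    rw [← ENNReal.ofReal_natCast]
    exact le_iSup (fun t : ℝ => ENNReal.ofReal t) (n : ℝ)
  · have hq0 := ENNReal.toReal_pos hq h
    simp only [N, h, if_false, I, _root_.div_zero, ENNReal.rpow_zero, mul_one]
    rw [pow_int hq0 ∞ (S := Set.Ioi 0) (fun t h _ => h) (fun t h => ⟨h, le_top⟩), ENNReal.top_rpow_of_pos hq0,
      ENNReal.top_div_of_ne_top ENNReal.ofReal_ne_top, ENNReal.top_rpow_of_pos (by positivity)]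

end LZ

/-- **O'Neil's Hölder inequality in Lorentz spaces.**  If `u ∈ L^{p₁,q₁}(Ω)` and
`v ∈ L^{p₂,q₂}(Ω)` with `1 ≤ pᵢ, qᵢ ≤ ∞`, `1/p₃ = 1/p₁ + 1/p₂` and `1/q₃ ≤ 1/q₁ + 1/q₂`,
then `uv ∈ L^{p₃,q₃}(Ω)` with `‖uv‖_{L^{p₃,q₃}} ≤ C ‖u‖_{L^{p₁,q₁}} ‖v‖_{L^{p₂,q₂}}`,
where `C` depends only on the exponents. -/
theorem oneil_holder_lorentz (p₁ p₂ p₃ q₁ q₂ q₃ : ℝ≥0∞)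
    (hp₁ : 1 ≤ p₁) (hp₂ : 1 ≤ p₂) (hq₁ : 1 ≤ q₁) (hq₂ : 1 ≤ q₂)
    (hp : 1 / p₃ = 1 / p₁ + 1 / p₂) (hq : 1 / q₃ ≤ 1 / q₁ + 1 / q₂) :
    ∃ C : ℝ, 0 < C ∧ ∀ (α : Type) (_ : MeasurableSpace α) (μ : Measure α) (u v : α → ℝ),
      Measurable u → Measurable v →
      lorentzNorm μ u p₁ q₁ < ∞ → lorentzNorm μ v p₂ q₂ < ∞ →
      lorentzNorm μ (fun x => u x * v x) p₃ q₃ < ∞ ∧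
      lorentzNorm μ (fun x => u x * v x) p₃ q₃ ≤
        ENNReal.ofReal C * lorentzNorm μ u p₁ q₁ * lorentzNorm μ v p₂ q₂ := by
  have hq10 : q₁ ≠ 0 := (zero_lt_one.trans_le hq₁).ne'
  have hq20 : q₂ ≠ 0 := (zero_lt_one.trans_le hq₂).ne'
  have hnorm : ∀ (α : Type) (_ : MeasurableSpace α) (μ : Measure α) (f : α → ℝ) (p q : ℝ≥0∞),
      lorentzNorm μ f p q = LZ.N (fun t => μ {x | t < ‖f x‖}) p.toReal q :=
    fun _ _ _ _ _ _ => rfl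
  simp only [hnorm]
  by_cases h1 : p₁ = ∞
  · refine ⟨1, one_pos, fun α _ μ u v _ _ hu _ => ?_⟩
    rw [h1, ENNReal.toReal_top, LZ.N_top _ hq10] at hu
    exact absurd hu (lt_irrefl _)
  by_cases h2 : p₂ = ∞
  · refine ⟨1, one_pos, fun α _ μ u v _ _ _ hv => ?_⟩
    rw [h2, ENNReal.toReal_top, LZ.N_top _ hq20] at hv
    exact absurd hv (lt_irrefl _)
  have hp10 : p₁ ≠ 0 := (zero_lt_one.trans_le hp₁).ne'
  have hp20 : p₂ ≠ 0 := (zero_lt_one.trans_le hp₂).ne'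
  have P1 := ENNReal.toReal_pos hp10 h1
  have P2 := ENNReal.toReal_pos hp20 h2
  simp only [one_div] at hp hq
  have hpe : 1 / p₃.toReal = 1 / p₁.toReal + 1 / p₂.toReal := by
    have := congrArg ENNReal.toReal hp
    rw [ENNReal.toReal_add (ENNReal.inv_ne_top.2 hp10) (ENNReal.inv_ne_top.2 hp20)] at this
    simpa [ENNReal.toReal_inv] using this
  have P3 : 0 < p₃.toReal := by
    have : 0 < 1 / p₃.toReal := by rw [hpe]; positivity
    exact one_div_pos.1 this
  set q : ℝ≥0∞ := (q₁⁻¹ + q₂⁻¹)⁻¹ with hqdef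
  have hqe : q⁻¹ = q₁⁻¹ + q₂⁻¹ := by rw [hqdef, inv_inv]
  have hqne : q ≠ 0 := by
    rw [hqdef, Ne, ENNReal.inv_eq_zero]
    exact ENNReal.add_ne_top.2 ⟨ENNReal.inv_ne_top.2 hq10, ENNReal.inv_ne_top.2 hq20⟩
  have hq3 : q ≤ q₃ := by rwa [← ENNReal.inv_le_inv, hqe]
  have hq3ne : q₃ ≠ 0 := fun h => hqne (le_zero_iff.1 (h ▸ hq3))
  obtain ⟨C₁, hC₁, H₁⟩ := LZ.holder_N P1 P2 P3 hpe hq10 hq20 hqe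
  obtain ⟨C₂, hC₂, H₂⟩ := LZ.N_embed P3 hqne hq3
  obtain ⟨D₁, hD₁, HW₁⟩ := LZ.W_le_N P1 hq10
  obtain ⟨D₂, hD₂, HW₂⟩ := LZ.W_le_N P2 hq20
  set K : ℝ≥0∞ := 2 ^ (1 / p₃.toReal) * (C₂ * C₁) with hK
  have hKt : K ≠ ∞ := ENNReal.mul_ne_top
    (ENNReal.rpow_ne_top_of_nonneg (by positivity) ENNReal.ofNat_ne_top) (ENNReal.mul_ne_top hC₂ hC₁)
  have hKC : K ≤ ENNReal.ofReal (K.toReal + 1) := by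
    rw [ENNReal.le_ofReal_iff_toReal_le hKt (by positivity)]
    linarith
  refine ⟨K.toReal + 1, by positivity, fun α _ μ u v _ _ hu hv => ?_⟩
  have anti : ∀ f : α → ℝ, Antitone fun t : ℝ => μ {x | t < ‖f x‖} := fun f s t hst =>
    measure_mono fun x (hx : t < ‖f x‖) => lt_of_le_of_lt hst hx
  have hau := anti u
  have hav := anti v
  have hac := anti (fun x => u x * v x)
  have hcond : ∀ s r : ℝ, 0 < s → 0 < r →
      μ {x | s * r < ‖u x * v x‖} / 2 ≤ max (μ {x | s < ‖u x‖}) (μ {x | r < ‖v x‖}) := by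
    intro s r hs hr
    refine ENNReal.div_le_of_le_mul ?_
    have hsub : {x | s * r < ‖u x * v x‖} ⊆ {x | s < ‖u x‖} ∪ {x | r < ‖v x‖} := by
      intro x hx
      by_contra hc
      simp only [Set.mem_union, Set.mem_setOf_eq, not_or, not_lt] at hc hx
      rw [norm_mul] at hx
      exact absurd hx (not_lt.2 (mul_le_mul hc.1 hc.2 (norm_nonneg _) hs.le))
    refine (measure_mono hsub).trans ((measure_union_le _ _).trans ?_)
    rw [mul_two]
    exact add_le_add (le_max_left _ _) (le_max_right _ _)
  have had : Antitone fun t : ℝ => μ {x | t < ‖u x * v x‖} / 2 := fun s t hst =>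
    ENNReal.div_le_div_right (hac hst) 2
  have hWu := ne_top_of_le_ne_top (ENNReal.mul_ne_top hD₁ hu.ne) (HW₁ _ hau)
  have hWv := ne_top_of_le_ne_top (ENNReal.mul_ne_top hD₂ hv.ne) (HW₂ _ hav)
  have hA := H₁ _ _ _ hau hav had hcond hWu hWv
  have hB := H₂ _ had (ne_top_of_le_ne_top
    (ENNReal.mul_ne_top (ENNReal.mul_ne_top hC₁ hu.ne) hv.ne) hA)
  have hmain : LZ.N (fun t : ℝ => μ {x | t < ‖u x * v x‖}) p₃.toReal q₃ ≤
      ENNReal.ofReal (K.toReal + 1) * LZ.N (fun t => μ {x | t < ‖u x‖}) p₁.toReal q₁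
        * LZ.N (fun t => μ {x | t < ‖v x‖}) p₂.toReal q₂ := by
    rw [LZ.N_half P3 hq3ne]
    calc _ ≤ 2 ^ (1 / p₃.toReal) * (C₂ * (C₁ * LZ.N (fun t => μ {x | t < ‖u x‖}) p₁.toReal q₁
        * LZ.N (fun t => μ {x | t < ‖v x‖}) p₂.toReal q₂)) := by
          gcongr
          exact hB.trans (by gcongr)
      _ = K * LZ.N (fun t => μ {x | t < ‖u x‖}) p₁.toReal q₁
        * LZ.N (fun t => μ {x | t < ‖v x‖}) p₂.toReal q₂ := by rw [hK]; ring
      _ ≤ _ := by gcongr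
  exact ⟨hmain.trans_lt (ENNReal.mul_lt_top (ENNReal.mul_lt_top ENNReal.ofReal_lt_top hu) hv), hmain⟩
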